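/- arXiv:0901.0823 — 12 statements merged into one kernel-verified Lean document; each statement's English description precedes it below -/
import Mathlib

section
/- Let R be a commutative ring with unit equipped with a total unary operation i : R → R satisfying the restricted inverse law Ril: x·(x·i(x)) = x for all x ∈ R. Then for all x, y ∈ R, if x·y = 1 then i(x) = y (implicit definition of inverse). -/
theorem meadow_ril_implicit_inverse {R : Type*} [CommRing R] (i : R → R)
    (Ril : ∀ x : R, x * (x * i x) = x) :
    ∀ x y : R, x * y = 1 → i x = y := by
  intro x y h
  linear_combination y ^ 2 * Ril x - (x * y + 1) * i x * h + y * h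
end

section
/- In every meadow, the inverse is multiplicative: for all x, y, i(x·y) = i(x)·i(y) (derivability of SIP2 from the meadow axioms). -/
/-- Two elements that are both generalized inverses of `x` in a commutative semigroup coincide. -/
theorem generalized_inverse_unique {M : Type*} [CommSemigroup M] {x a b : M}
    (hxa : x * (x * a) = x) (hax : a * (a * x) = a)
    (hxb : x * (x * b) = x) (hbx : b * (b * x) = b) : a = b := by
  have ha : a = a * x * b :=
    calc a = a * (a * (x * (x * b))) := by rw [hxb, hax]
      _ = a * (a * x) * x * b := by ac_rfl
      _ = a * x * b := by rw [hax]
  have hb : b = a * x * b :=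
    calc b = b * (b * (x * (x * a))) := by rw [hxa, hbx]
      _ = a * x * (b * (b * x)) := by ac_rfl
      _ = a * x * b := by rw [hbx]
  exact ha.trans hb.symm

theorem meadow_inv_mul {R : Type*} [CommRing R] (i : R → R)
    (Ref : ∀ x : R, i (i x) = x)
    (Ril : ∀ x : R, x * (x * i x) = x) :
    ∀ x y : R, i (x * y) = i x * i y := by
  intro x y
  have Ril_inv (z : R) : i z * (i z * z) = i z := by
    simpa only [Ref] using Ril (i z)
  refine generalized_inverse_unique (Ril (x * y)) (Ril_inv (x * y)) ?_ ?_
  · calc x * y * (x * y * (i x * i y)) = x * (x * i x) * (y * (y * i y)) := by ring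
      _ = x * y := by rw [Ril, Ril]
  · calc i x * i y * (i x * i y * (x * y)) = i x * (i x * x) * (i y * (i y * y)) := by ring
      _ = i x * i y := by rw [Ril_inv, Ril_inv]
end

section
/- In every meadow, the inverse commutes with negation: for all x, i(−x) = −i(x) (derivability of SIP1 from the meadow axioms). -/
/-- In a commutative ring, an element has at most one generalized inverse. -/
theorem eq_of_generalized_inverse {R : Type*} [CommRing R] {x y z : R}
    (hxy : x * (x * y) = x) (hyx : y * (y * x) = y)
    (hxz : x * (x * z) = x) (hzx : z * (z * x) = z) : y = z := by
  linear_combination (x * z - 1) * hyx - y ^ 2 * hxz - (x * y - 1) * hzx + z ^ 2 * hxy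

theorem meadow_inv_neg {R : Type*} [CommRing R] (i : R → R)
    (Ref : ∀ x : R, i (i x) = x)
    (Ril : ∀ x : R, x * (x * i x) = x) :
    ∀ x : R, i (-x) = -i x := by
  have Ril' : ∀ x : R, i x * (i x * x) = i x := fun x => by
    simpa only [Ref] using Ril (i x)
  intro x
  refine eq_of_generalized_inverse (Ril (-x)) (Ril' (-x)) ?_ ?_
  · linear_combination -Ril x
  · linear_combination -Ril' x
end

section
/- In every meadow, for every element x, if x³ = x then x = i(x). -/
theorem meadow_cube_self_inverse {R : Type*} [CommRing R] (i : R → R)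
    (Ref : ∀ x : R, i (i x) = x)
    (Ril : ∀ x : R, x * (x * i x) = x) :
    ∀ x : R, x ^ 3 = x → x = i x := by
  intro x hx
  have hxy := Ril x
  have hyx := Ril (i x)
  rw [Ref] at hyx
  calc x = x * (x * i x) := hxy.symm
    _ = x * (x * i x) * (x * i x) := by rw [hxy, hxy]
    _ = i x * (i x * x ^ 3) := by ring
    _ = i x := by rw [hx, hyx]
end

section
/- In every meadow, for every element x, if x⁴ = x then x = i(x)·i(x). -/
theorem meadow_fourth_power {R : Type*} [CommRing R] (i : R → R)
    (Ref : ∀ x : R, i (i x) = x)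
    (Ril : ∀ x : R, x * (x * i x) = x) :
    ∀ x : R, x ^ 4 = x → x = i x * i x := by
  intro x hx
  have hy : i x * (i x * x) = i x := by simpa only [Ref] using Ril (i x)
  have hsq : i x = x ^ 2 :=
    calc i x = i x * (i x * x ^ 4) := by rw [hx, hy]
      _ = (x * (x * i x)) ^ 2 := by ring
      _ = x ^ 2 := by rw [Ril]
  calc x = x ^ 4 := hx.symm
    _ = i x * i x := by rw [hsq]; ring
end

section
/- Let R be a commutative von Neumann regular ring with unit, i.e. a commutative ring with unit such that for every x ∈ R there exists y ∈ R with x·y·x = x. Then R can be expanded to a meadow: there exists a function i : R → R satisfying Ref: i(i(x)) = x for all x, and Ril: x·(x·i(x)) = x for all x. -/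
/-- Generalized inverses in a commutative semigroup are unique. -/
theorem generalized_inverse_unique_s9 {S : Type*} [CommSemigroup S] {x y z : S}
    (hxy : x * (x * y) = x) (hyx : y * (y * x) = y)
    (hxz : x * (x * z) = x) (hzx : z * (z * x) = z) : y = z :=
  calc y = y * (y * (x * (x * z))) := by rw [hxz, hyx]
    _ = y * (y * x) * (x * z) := by ac_rfl
    _ = z * (z * x) * (x * y) := by rw [hyx, hzx]; ac_rfl
    _ = z * (z * (x * (x * y))) := by ac_rfl
    _ = z := by rw [hxy, hzx]

theorem vonNeumannRegular_expands_to_meadow {R : Type*} [CommRing R]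
    (hreg : ∀ x : R, ∃ y : R, x * y * x = x) :
    ∃ i : R → R, (∀ x : R, i (i x) = x) ∧ (∀ x : R, x * (x * i x) = x) := by
  have hinv : ∀ x : R, ∃ y : R, x * (x * y) = x ∧ y * (y * x) = y := by
    intro x
    obtain ⟨y, hy⟩ := hreg x
    refine ⟨y * x * y, ?_, ?_⟩
    · calc x * (x * (y * x * y)) = (x * y * x) * y * x := by ring
        _ = x := by rw [hy, hy]
    · calc y * x * y * (y * x * y * x) = y * (x * y * x * y * x) * y := by ring
        _ = y * x * y := by rw [hy, hy]
  choose i hi hi' using hinv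
  exact ⟨i, fun x => generalized_inverse_unique_s9 (hi (i x)) (hi' (i x)) (hi' x) (hi x), hi⟩
end

section
/- In every meadow, the inverse has the explicit first-order definition: for all x, y ∈ R, i(x) = y if and only if there exists z ∈ R with x·z·x = x and y = z·x·z. -/
theorem meadow_inverse_explicit_definition {R : Type*} [CommRing R] (i : R → R)
    (Ref : ∀ x : R, i (i x) = x)
    (Ril : ∀ x : R, x * (x * i x) = x) :
    ∀ x y : R, i x = y ↔ ∃ z : R, x * z * x = x ∧ y = z * x * z := by
  intro x y
  have hx : x * (x * i x) = x := Ril x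
  have hi : i x * (i x * x) = i x := by simpa only [Ref] using Ril (i x)
  constructor
  · rintro rfl
    exact ⟨i x, by linear_combination hx, by linear_combination -hi⟩
  · rintro ⟨z, hz, rfl⟩
    -- Both sides equal `i x * x * z`.
    linear_combination -hi - i x ^ 2 * hz + z ^ 2 * hx + (i x * z) * hx - (i x * z) * hz
end

section
/- Let R be a meadow and x ∈ R. Then the principal ideal generated by x equals the principal ideal generated by the idempotent x·i(x), and moreover x, x·i(x), and i(x) all belong to the principal ideal generated by x. -/
theorem meadow_principal_ideal {R : Type*} [CommRing R] (i : R → R)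
    (Ref : ∀ x : R, i (i x) = x)
    (Ril : ∀ x : R, x * (x * i x) = x)
    (x : R) :
    Ideal.span {x} = Ideal.span {x * i x} ∧
      x ∈ Ideal.span {x} ∧ x * i x ∈ Ideal.span {x} ∧ i x ∈ Ideal.span {x} := by
  have hx : x * i x ∣ x := ⟨x, by rw [mul_comm, Ril]⟩
  have hix : x ∣ i x := ⟨i x * i x, by
    have h := Ril (i x)
    rw [Ref] at h
    linear_combination -h⟩
  simp only [Ideal.mem_span_singleton]
  refine ⟨le_antisymm ?_ ?_, dvd_rfl, dvd_mul_right x (i x), hix⟩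
  · exact Ideal.span_singleton_le_span_singleton.mpr hx
  · exact Ideal.span_singleton_le_span_singleton.mpr (dvd_mul_right x (i x))
end

section
/- Let R be a meadow, F a field whose inverse operation is zero-totalized (0⁻¹ = 0, as in Mathlib's field inverse), and H : R → F a ring homomorphism. Then H preserves inverses: for every x ∈ R, H(i(x)) = (H(x))⁻¹. -/
theorem meadow_hom_preserves_inverse {R : Type*} [CommRing R] {F : Type*} [Field F]
    (i : R → R)
    (Ref : ∀ x : R, i (i x) = x)
    (Ril : ∀ x : R, x * (x * i x) = x)
    (H : R →+* F) :
    ∀ x : R, H (i x) = (H x)⁻¹ := by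
  intro x
  by_cases hx : H x = 0
  · have h := congrArg H (Ril (i x))
    rw [Ref, map_mul, map_mul, hx, mul_zero, mul_zero] at h
    rw [hx, inv_zero, ← h]
  · have h := congrArg H (Ril x)
    rw [map_mul, map_mul] at h
    exact eq_inv_of_mul_eq_one_right (mul_left_cancel₀ hx (h.trans (mul_one _).symm))
end

section
/- In every meadow, for all x, y: (x·y)·i(x·y) − x·i(x) − y·i(y) = 0 if and only if (x = 0 and y = 0). (The term U(x,y) encodes a conjunction of two equations as a single equation.) -/
theorem meadow_conjunction_encoding {R : Type*} [CommRing R] (i : R → R)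
    (Ref : ∀ x : R, i (i x) = x)
    (Ril : ∀ x : R, x * (x * i x) = x) :
    ∀ x y : R, (x * y) * i (x * y) - x * i x - y * i y = 0 ↔ (x = 0 ∧ y = 0) := by
  intro x y
  constructor
  · intro h
    have hx := Ril x
    have hy := Ril y
    have hxy := Ril (x * y)
    have hmul : (x * y) * i (x * y) = (x * i x) * (y * i y) := by
      calc (x * y) * i (x * y)
          = (x * (x * i x)) * (y * (y * i y)) * i (x * y) := by rw [hx, hy]
        _ = (x * y * (x * y * i (x * y))) * (i x * i y) := by ring
        _ = (x * i x) * (y * i y) := by rw [hxy]; ring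
    rw [hmul] at h
    constructor
    · linear_combination (-x) * h + (y * i y - 1) * hx
    · linear_combination (-y) * h + (x * i x - 1) * hy
  · rintro ⟨rfl, rfl⟩
    simp
end

section
/- Let R be a meadow of finite characteristic k > 0, i.e. k is the smallest positive natural number such that k·1 = 0 in R. Then k is squarefree. -/
theorem meadow_char_squarefree {R : Type*} [CommRing R] (i : R → R)
    (Ref : ∀ x : R, i (i x) = x)
    (Ril : ∀ x : R, x * (x * i x) = x)
    (k : ℕ) (hk : 0 < k) (hchar : (k : R) = 0)
    (hmin : ∀ m : ℕ, 0 < m → (m : R) = 0 → k ≤ m) :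
    Squarefree k := by
  rintro a ⟨c, rfl⟩
  have hac : 0 < a * c := Nat.pos_of_ne_zero fun h => by
    rw [mul_assoc, h, mul_zero] at hk
    exact hk.false
  have hzero : ((a * c : ℕ) : R) = 0 := by
    push_cast at hchar ⊢
    linear_combination i a * hchar - c * Ril a
  have hle : a * (a * c) ≤ 1 * (a * c) := by
    rw [← mul_assoc, one_mul]
    exact hmin _ hac hzero
  have ha_le : a ≤ 1 := Nat.le_of_mul_le_mul_right hle hac
  have ha_pos : 0 < a := Nat.pos_of_mul_pos_right hac
  exact Nat.isUnit_iff.mpr (le_antisymm ha_le ha_pos)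
end

section
/- Let k be a positive squarefree natural number. Then the ring ℤ/kℤ of integers modulo k can be expanded to a meadow: there exists a function i : ℤ/kℤ → ℤ/kℤ satisfying Ref: i(i(x)) = x for all x, and Ril: x·(x·i(x)) = x for all x. (This is the content of the theorem that for squarefree k the initial meadow Md_k of characteristic k has exactly k elements, namely 0, 1, ..., k−1 with arithmetic modulo k.) -/
/-- In a finite reduced commutative ring some positive power acts as a local identity,
uniformly in the element. -/
theorem exists_pos_forall_pow_mul_self_eq (R : Type*) [CommRing R] [Finite R] [IsReduced R] :
    ∃ n : ℕ, 0 < n ∧ ∀ x : R, x ^ n * x = x := by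
  obtain ⟨a, -, b, -, hab, hpow⟩ :=
    Set.infinite_univ.exists_lt_map_eq_of_mapsTo (f := fun (n : ℕ) (x : R) => x ^ n)
      (Set.mapsTo_univ _ _) Set.finite_univ
  obtain ⟨n, rfl⟩ := Nat.exists_eq_add_of_lt hab
  refine ⟨n + 1, n.succ_pos, fun x => ?_⟩
  have hx : x ^ a = x ^ (a + n + 1) := congrFun hpow x
  have hzero : x ^ a * (x ^ (n + 1) - 1) = 0 := by
    rw [mul_sub, mul_one, ← pow_add, ← add_assoc, ← hx, sub_self]
  have hnil : IsNilpotent (x ^ (n + 1) * x - x) := by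
    refine ⟨a + 1, ?_⟩
    calc (x ^ (n + 1) * x - x) ^ (a + 1)
        = x ^ a * (x ^ (n + 1) - 1) * (x * (x ^ (n + 1) - 1) ^ a) := by
          rw [← sub_one_mul, mul_pow]; ring
      _ = 0 := by rw [hzero, zero_mul]
  exact sub_eq_zero.mp hnil.eq_zero

/-- If `x ^ n` fixes `x` under multiplication, then so does every power of `x ^ n`. -/
theorem pow_mul_pow_mul_self_eq {M : Type*} [Monoid M] {x : M} {n : ℕ} (h : x ^ n * x = x)
    (m : ℕ) : x ^ (n * m) * x = x := by
  induction m with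
  | zero => simp
  | succ m ih => rw [Nat.mul_succ, pow_add, mul_assoc, h, ih]

/-- Every finite reduced commutative ring can be expanded to a meadow. -/
theorem exists_meadow_inverse (R : Type*) [CommRing R] [Finite R] [IsReduced R] :
    ∃ i : R → R, (∀ x : R, i (i x) = x) ∧ (∀ x : R, x * (x * i x) = x) := by
  obtain ⟨n, hn, h⟩ := exists_pos_forall_pow_mul_self_eq R
  obtain ⟨d, rfl⟩ := Nat.exists_eq_add_of_lt hn
  refine ⟨fun x => x ^ (2 * d + 1), fun x => ?_, fun x => ?_⟩
  · calc (x ^ (2 * d + 1)) ^ (2 * d + 1) = x ^ ((0 + d + 1) * (4 * d)) * x := by ring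
      _ = x := pow_mul_pow_mul_self_eq (h x) _
  · calc x * (x * x ^ (2 * d + 1)) = x ^ ((0 + d + 1) * 2) * x := by ring
      _ = x := pow_mul_pow_mul_self_eq (h x) _

theorem zmod_squarefree_meadow (k : ℕ) (hk : 0 < k) (hsf : Squarefree k) :
    ∃ i : ZMod k → ZMod k,
      (∀ x : ZMod k, i (i x) = x) ∧ (∀ x : ZMod k, x * (x * i x) = x) := by
  have : NeZero k := ⟨hk.ne'⟩
  have : IsReduced (ZMod k) := isReduced_zmod.2 (Or.inl hsf)
  exact exists_meadow_inverse (ZMod k)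
end
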